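/- Let k be a positive integer and let G be a finite simple graph such that 1 ≤ deg(v) ≤ 2(k−1) for every vertex v of G. Then |V(G)| ≤ (2k−1)·mm(G) and |E(G)| ≤ (2k−1)·mm(G). -/

import Mathlib

/-- `M` is a matching of `G`: a finite set of edges of `G` that are pairwise
vertex-disjoint. -/
def IsMatchingSet {V : Type*} (G : SimpleGraph V) (M : Finset (Sym2 V)) : Prop :=
  (∀ e ∈ M, e ∈ G.edgeSet) ∧
  (∀ e ∈ M, ∀ f ∈ M, e ≠ f → ∀ v : V, ¬ (v ∈ e ∧ v ∈ f))

/-!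
Let `M` be a maximum matching and let all degrees be at most `d`.

*Vertices.* Excluding augmenting paths of length three, every edge of `M` has an endpoint adjacent
to all the uncovered vertices that see the edge. These `mm(G)` endpoints dominate all non-isolated
vertices, and each of them dominates at most `d + 1` vertices.

*Edges.* If some vertex is covered by every maximum matching, deleting it removes at most `d` edges
and lowers `mm(G)`, so induction applies. Otherwise a distance-two form of Gallai's lemma says that
two vertices missed by `M` have no common neighbour. The neighbourhoods of the missed vertices are
then disjoint sets of covered vertices, so the missed vertices have total degree at most `2 mm(G)`,
while the `2 mm(G)` covered vertices have total degree at most `2 d mm(G)`.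
-/

section

variable {V : Type*} {G H : SimpleGraph V} {M N : Finset (Sym2 V)} {e f : Sym2 V}
  {a b u v w x y : V} {d : ℕ}

namespace IsMatchingSet

lemma eq_of_mem (hM : IsMatchingSet G M) (he : e ∈ M) (hf : f ∈ M) (hve : v ∈ e) (hvf : v ∈ f) :
    e = f :=
  by_contra fun hne => hM.2 e he f hf hne v ⟨hve, hvf⟩

lemma subset (hM : IsMatchingSet G M) (hNM : N ⊆ M) : IsMatchingSet G N :=
  ⟨fun e he => hM.1 e (hNM he), fun e he f hf => hM.2 e (hNM he) f (hNM hf)⟩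

lemma mono (hM : IsMatchingSet G M) (hGH : G ≤ H) : IsMatchingSet H M :=
  ⟨fun e he => SimpleGraph.edgeSet_mono hGH (hM.1 e he), hM.2⟩

end IsMatchingSet

section Covered

variable [DecidableEq V]

/-- The set `V(M)` of endpoints of the edges in `M`; a vertex outside it is missed by `M`. -/
def coveredVerts (M : Finset (Sym2 V)) : Finset V :=
  M.biUnion Sym2.toFinset

lemma mem_coveredVerts : v ∈ coveredVerts M ↔ ∃ e ∈ M, v ∈ e := by
  simp only [coveredVerts, Finset.mem_biUnion, Sym2.mem_toFinset]

lemma mem_coveredVerts_insert :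
    v ∈ coveredVerts (insert e M) ↔ v ∈ e ∨ v ∈ coveredVerts M := by
  simp only [mem_coveredVerts, Finset.exists_mem_insert]

namespace IsMatchingSet

lemma card_coveredVerts (hM : IsMatchingSet G M) : (coveredVerts M).card = 2 * M.card := by
  rw [coveredVerts, Finset.card_biUnion, Finset.sum_const_nat (m := 2), mul_comm]
  · exact fun e he =>
      Sym2.card_toFinset_of_not_isDiag e (G.not_isDiag_of_mem_edgeSet (hM.1 e he))
  · refine fun e he f hf hne => Finset.disjoint_left.2 fun v hve hvf => hne ?_
    exact hM.eq_of_mem he hf (Sym2.mem_toFinset.1 hve) (Sym2.mem_toFinset.1 hvf)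

lemma mem_coveredVerts_erase (hM : IsMatchingSet G M) (hf : f ∈ M) :
    v ∈ coveredVerts (M.erase f) ↔ v ∈ coveredVerts M ∧ v ∉ f := by
  simp only [mem_coveredVerts, Finset.mem_erase]
  constructor
  · rintro ⟨e, ⟨hef, he⟩, hve⟩
    exact ⟨⟨e, he, hve⟩, fun hvf => hef (hM.eq_of_mem he hf hve hvf)⟩
  · rintro ⟨⟨e, he, hve⟩, hvf⟩
    exact ⟨e, ⟨fun h => hvf (h ▸ hve), he⟩, hve⟩

protected lemma insert (hM : IsMatchingSet G M) (he : e ∈ G.edgeSet)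
    (hdisj : ∀ v ∈ e, v ∉ coveredVerts M) : IsMatchingSet G (insert e M) := by
  have hmem : ∀ f ∈ M, ∀ v, ¬ (v ∈ e ∧ v ∈ f) := fun f hf v hv =>
    hdisj v hv.1 (mem_coveredVerts.2 ⟨f, hf, hv.2⟩)
  refine ⟨Finset.forall_mem_insert .. |>.2 ⟨he, hM.1⟩, fun f hf g hg hfg v hv => ?_⟩
  rcases Finset.mem_insert.1 hf with rfl | hfM <;> rcases Finset.mem_insert.1 hg with rfl | hgM
  · exact hfg rfl
  · exact hmem g hgM v hv
  · exact hmem f hfM v hv.symm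
  · exact hM.2 f hfM g hgM hfg v hv

lemma notMem_coveredVerts_exchange (hM : IsMatchingSet G M) (hf : f ∈ M) (hyf : y ∈ f)
    (hv : v ∉ coveredVerts M) (hvx : v ≠ x) :
    v ∉ coveredVerts (insert s(x, y) (M.erase f)) := by
  have hvy : v ≠ y := by
    rintro rfl
    exact hv (mem_coveredVerts.2 ⟨f, hf, hyf⟩)
  rw [mem_coveredVerts_insert, hM.mem_coveredVerts_erase hf, Sym2.mem_iff]
  tauto

end IsMatchingSet

end Covered

/-- `M` is a matching of `G` with `mm(G)` edges. Every statement about `mm(G)` is phrased in terms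
of `M.card` for such an `M`. -/
structure IsMaximumMatching (G : SimpleGraph V) (M : Finset (Sym2 V)) : Prop where
  isMatchingSet : IsMatchingSet G M
  card_le : ∀ N, IsMatchingSet G N → N.card ≤ M.card

lemma exists_isMaximumMatching [Finite V] (G : SimpleGraph V) : ∃ M, IsMaximumMatching G M := by
  obtain ⟨M, hM, hmax⟩ := Set.exists_max_image {M | IsMatchingSet G M} Finset.card
    (Set.toFinite _) ⟨∅, by simp [IsMatchingSet]⟩
  exact ⟨M, hM, hmax⟩

namespace IsMaximumMatching

lemma of_card_le (hM : IsMaximumMatching G M) (hN : IsMatchingSet G N) (hMN : M.card ≤ N.card) :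
    IsMaximumMatching G N :=
  ⟨hN, fun K hK => (hM.card_le K hK).trans hMN⟩

section Exchange

variable [DecidableEq V]

lemma mem_coveredVerts_of_adj (hM : IsMaximumMatching G M) (hx : x ∉ coveredVerts M)
    (hxy : G.Adj x y) : y ∈ coveredVerts M := by
  by_contra hy
  have hdisj : ∀ v ∈ s(x, y), v ∉ coveredVerts M := by
    simpa only [Sym2.ball] using ⟨hx, hy⟩
  have hnotMem : s(x, y) ∉ M := fun h => hx (mem_coveredVerts.2 ⟨_, h, Sym2.mem_mk_left x y⟩)
  have hcard := hM.card_le _ (hM.isMatchingSet.insert hxy hdisj)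
  rw [Finset.card_insert_of_notMem hnotMem] at hcard
  omega

lemma exchange (hM : IsMaximumMatching G M) (hx : x ∉ coveredVerts M) (hxy : G.Adj x y)
    (hf : f ∈ M) (hyf : y ∈ f) : IsMaximumMatching G (insert s(x, y) (M.erase f)) := by
  have hx' : x ∉ coveredVerts (M.erase f) := fun h =>
    hx ((hM.isMatchingSet.mem_coveredVerts_erase hf).1 h).1
  have hy' : y ∉ coveredVerts (M.erase f) := fun h =>
    ((hM.isMatchingSet.mem_coveredVerts_erase hf).1 h).2 hyf
  have hnotMem : s(x, y) ∉ M.erase f := fun h =>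
    hx' (mem_coveredVerts.2 ⟨_, h, Sym2.mem_mk_left x y⟩)
  refine hM.of_card_le ?_ ?_
  · refine (hM.isMatchingSet.subset (M.erase_subset f)).insert hxy ?_
    simpa only [Sym2.ball] using ⟨hx', hy'⟩
  · rw [Finset.card_insert_of_notMem hnotMem, Finset.card_erase_add_one hf]

/-- Otherwise `a - x - y - b` would be an augmenting path. -/
lemma eq_of_adj_of_adj (hM : IsMaximumMatching G M) (hxy : s(x, y) ∈ M)
    (ha : a ∉ coveredVerts M) (hb : b ∉ coveredVerts M) (hax : G.Adj a x) (hby : G.Adj b y) :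
    a = b := by
  by_contra hab
  have hyxy : y ∈ s(x, y) := Sym2.mem_mk_right x y
  have hbx : x ≠ b := by
    rintro rfl
    exact hb (mem_coveredVerts.2 ⟨_, hxy, Sym2.mem_mk_left _ _⟩)
  have hx : x ∈ coveredVerts (insert s(b, y) (M.erase s(x, y))) :=
    (hM.exchange hb hby hxy hyxy).mem_coveredVerts_of_adj
      (hM.isMatchingSet.notMem_coveredVerts_exchange hxy hyxy ha hab) hax
  rw [mem_coveredVerts_insert, hM.isMatchingSet.mem_coveredVerts_erase hxy, Sym2.mem_iff] at hx
  have hne : x ≠ y := (hM.isMatchingSet.1 _ hxy : G.Adj x y).ne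
  simp [hbx, hne] at hx

lemma exists_mem_forall_notMem_adj (hM : IsMaximumMatching G M) (he : e ∈ M) :
    ∃ z ∈ e, ∀ a ∉ coveredVerts M, ∀ x ∈ e, G.Adj a x → G.Adj a z := by
  induction e with | _ x y
  by_cases hy : ∃ b ∉ coveredVerts M, G.Adj b y
  · obtain ⟨b, hb, hby⟩ := hy
    refine ⟨y, Sym2.mem_mk_right x y, fun a ha => Sym2.ball.2 ⟨fun hax => ?_, id⟩⟩
    rwa [hM.eq_of_adj_of_adj he ha hb hax hby]
  · push Not at hy
    exact ⟨x, Sym2.mem_mk_left x y, fun a ha => Sym2.ball.2 ⟨id, fun hay => (hy a ha hay).elim⟩⟩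

/-- The matchings have equal size, so `N` also misses two vertices covered by `M`, one of which is
different from `w`; insert its `M`-edge into `N`. -/
lemma exists_exchange_toward (hM : IsMaximumMatching G M) (hN : IsMaximumMatching G N)
    (hw : w ∉ coveredVerts N) (hNM : 1 < (coveredVerts N \ coveredVerts M).card) :
    ∃ N', IsMaximumMatching G N' ∧ w ∉ coveredVerts N' ∧ M \ N' ⊂ M \ N := by
  have hcard : (coveredVerts M).card = (coveredVerts N).card := by
    rw [hM.isMatchingSet.card_coveredVerts, hN.isMatchingSet.card_coveredVerts,
      (hN.card_le M hM.isMatchingSet).antisymm (hM.card_le N hN.isMatchingSet)]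
  have hone_lt : 1 < (coveredVerts M \ coveredVerts N).card := by
    rwa [Finset.card_sdiff_comm hcard]
  obtain ⟨x, hx, hxw⟩ := Finset.exists_mem_ne hone_lt w
  obtain ⟨hxM, hxN⟩ := Finset.mem_sdiff.1 hx
  obtain ⟨e, he, hxe⟩ := mem_coveredVerts.1 hxM
  obtain ⟨y, rfl⟩ := Sym2.mem_iff_exists.1 hxe
  have hxy : G.Adj x y := hM.isMatchingSet.1 _ he
  obtain ⟨f, hf, hyf⟩ := mem_coveredVerts.1 (hN.mem_coveredVerts_of_adj hxN hxy)
  have hxyN : s(x, y) ∉ N := fun h => hxN (mem_coveredVerts.2 ⟨_, h, hxe⟩)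
  have hfM : f ∉ M := fun h => hxyN
    (hM.isMatchingSet.eq_of_mem he h (Sym2.mem_mk_right x y) hyf ▸ hf)
  refine ⟨_, hN.exchange hxN hxy hf hyf,
    hN.isMatchingSet.notMem_coveredVerts_exchange hf hyf hw hxw.symm,
    (Finset.ssubset_iff_of_subset fun e' => ?_).2 ⟨s(x, y), by simp [he, hxyN], by simp⟩⟩
  simp only [Finset.mem_sdiff, Finset.mem_insert, Finset.mem_erase]
  grind

theorem eq_of_adj_of_notMem_coveredVerts (hM : IsMaximumMatching G M)
    (hw : ∃ N, IsMaximumMatching G N ∧ w ∉ coveredVerts N) (hu : u ∉ coveredVerts M)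
    (hv : v ∉ coveredVerts M) (huw : G.Adj u w) (hvw : G.Adj v w) : u = v := by
  by_contra huv
  obtain ⟨N, ⟨hN, hwN⟩, hmin⟩ := exists_minimalFor_of_wellFoundedLT
    (fun N => IsMaximumMatching G N ∧ w ∉ coveredVerts N) (fun N => (M \ N).card) hw
  have hNM : 1 < (coveredVerts N \ coveredVerts M).card := Finset.one_lt_card.2
    ⟨u, Finset.mem_sdiff.2 ⟨hN.mem_coveredVerts_of_adj hwN huw.symm, hu⟩,
      v, Finset.mem_sdiff.2 ⟨hN.mem_coveredVerts_of_adj hwN hvw.symm, hv⟩, huv⟩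
  obtain ⟨N', hN', hwN', hlt⟩ := hM.exists_exchange_toward hN hwN hNM
  have hcard := Finset.card_lt_card hlt
  exact hcard.not_ge (hmin ⟨hN', hwN'⟩ hcard.le)

lemma card_lt_of_deleteIncidenceSet (hM : IsMaximumMatching G M)
    (hw : ∀ K, IsMaximumMatching G K → w ∈ coveredVerts K)
    (hN : IsMatchingSet (G.deleteIncidenceSet w) N) : N.card < M.card := by
  have hNG : IsMatchingSet G N := hN.mono (G.deleteIncidenceSet_le w)
  by_contra! hle
  obtain ⟨e, he, hwe⟩ := mem_coveredVerts.1 (hw N (hM.of_card_le hNG hle))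
  have hmem := hN.1 e he
  rw [SimpleGraph.edgeSet_deleteIncidenceSet] at hmem
  exact hmem.2 ⟨hmem.1, hwe⟩

variable [Fintype V] [DecidableRel G.Adj]

lemma sum_degree_compl_coveredVerts_le (hM : IsMaximumMatching G M)
    (hmiss : ∀ w, ∃ N, IsMaximumMatching G N ∧ w ∉ coveredVerts N) :
    ∑ v ∈ (coveredVerts M)ᶜ, G.degree v ≤ (coveredVerts M).card := by
  have hdisj : ((coveredVerts M)ᶜ : Set V).PairwiseDisjoint (G.neighborFinset ·) := by
    refine fun u hu v hv huv => Finset.disjoint_left.2 fun w huw hvw => huv ?_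
    exact hM.eq_of_adj_of_notMem_coveredVerts (hmiss w) hu hv
      ((G.mem_neighborFinset u w).1 huw) ((G.mem_neighborFinset v w).1 hvw)
  calc ∑ v ∈ (coveredVerts M)ᶜ, G.degree v
      = ((coveredVerts M)ᶜ.biUnion (G.neighborFinset ·)).card :=
        (Finset.card_biUnion (by simpa using hdisj)).symm
    _ ≤ (coveredVerts M).card := Finset.card_le_card <| Finset.biUnion_subset.2 fun v hv w hvw =>
        hM.mem_coveredVerts_of_adj (Finset.mem_compl.1 hv) ((G.mem_neighborFinset v w).1 hvw)

lemma card_edgeFinset_le_of_forall_exists_notMem (hM : IsMaximumMatching G M)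
    (hdeg : ∀ v, G.degree v ≤ d)
    (hmiss : ∀ w, ∃ N, IsMaximumMatching G N ∧ w ∉ coveredVerts N) :
    G.edgeFinset.card ≤ (d + 1) * M.card := by
  have hsum : 2 * G.edgeFinset.card ≤ 2 * ((d + 1) * M.card) :=
    calc 2 * G.edgeFinset.card
        = ∑ v ∈ coveredVerts M, G.degree v + ∑ v ∈ (coveredVerts M)ᶜ, G.degree v := by
          rw [Finset.sum_add_sum_compl, G.sum_degrees_eq_twice_card_edges]
      _ ≤ (coveredVerts M).card * d + (coveredVerts M).card :=
          add_le_add (Finset.sum_le_card_nsmul _ _ _ fun v _ => hdeg v)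
            (hM.sum_degree_compl_coveredVerts_le hmiss)
      _ = 2 * ((d + 1) * M.card) := by
          rw [hM.isMatchingSet.card_coveredVerts]
          ring
  omega

end Exchange

theorem exists_card_le_dominating_support (hM : IsMaximumMatching G M) :
    ∃ D : Finset V, D.card ≤ M.card ∧ ∀ v ∈ G.support, ∃ z ∈ D, v = z ∨ G.Adj z v := by
  classical
  choose z hz hadj using fun e : M => hM.exists_mem_forall_notMem_adj e.2
  refine ⟨M.attach.image z, Finset.card_image_le.trans_eq M.card_attach, fun v hv => ?_⟩
  suffices h : ∃ e : M, v = z e ∨ G.Adj v (z e) by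
    obtain ⟨e, he⟩ := h
    exact ⟨z e, Finset.mem_image_of_mem z (M.mem_attach e), he.imp_right fun h => h.symm⟩
  by_cases hvM : v ∈ coveredVerts M
  · obtain ⟨e, he, hve⟩ := mem_coveredVerts.1 hvM
    refine ⟨⟨e, he⟩, or_iff_not_imp_left.2 fun hne => ?_⟩
    rw [← SimpleGraph.mem_edgeSet, ← (Sym2.mem_and_mem_iff hne).1 ⟨hve, hz ⟨e, he⟩⟩]
    exact hM.isMatchingSet.1 e he
  · obtain ⟨x, hvx⟩ := G.mem_support.1 hv
    obtain ⟨e, he, hxe⟩ := mem_coveredVerts.1 (hM.mem_coveredVerts_of_adj hvM hvx)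
    exact ⟨⟨e, he⟩, Or.inr (hadj ⟨e, he⟩ v hvM x hxe hvx)⟩

theorem encard_support_le [G.LocallyFinite] (hM : IsMaximumMatching G M)
    (hdeg : ∀ v, G.degree v ≤ d) : G.support.encard ≤ ((d + 1) * M.card : ℕ) := by
  classical
  obtain ⟨D, hDM, hdom⟩ := hM.exists_card_le_dominating_support
  have hsub : G.support ⊆ (D.biUnion fun z => insert z (G.neighborFinset z) : Finset V) := by
    intro v hv
    simpa using hdom v hv
  calc G.support.encard
      ≤ (D.biUnion fun z => insert z (G.neighborFinset z)).card :=
        (Set.encard_le_encard hsub).trans_eq (Set.encard_coe_eq_coe_finsetCard _)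
    _ ≤ (D.card * (d + 1) : ℕ) := by
        gcongr
        refine Finset.card_biUnion_le_card_mul _ _ _ fun z _ => (Finset.card_insert_le _ _).trans ?_
        simpa using hdeg z
    _ ≤ ((d + 1) * M.card : ℕ) := by
        rw [mul_comm]
        gcongr

theorem card_edgeFinset_le [Fintype V] [DecidableRel G.Adj] (hM : IsMaximumMatching G M)
    (hdeg : ∀ v, G.degree v ≤ d) : G.edgeFinset.card ≤ (d + 1) * M.card := by
  classical
  induction hcard : M.card using Nat.strong_induction_on generalizing G M with
  | _ m ih
  subst hcard
  by_cases hmiss : ∀ w, ∃ N, IsMaximumMatching G N ∧ w ∉ coveredVerts N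
  · exact hM.card_edgeFinset_le_of_forall_exists_notMem hdeg hmiss
  · push Not at hmiss
    obtain ⟨w, hw⟩ := hmiss
    obtain ⟨N, hN⟩ := exists_isMaximumMatching (G.deleteIncidenceSet w)
    have hlt : N.card < M.card := hM.card_lt_of_deleteIncidenceSet hw hN.isMatchingSet
    calc G.edgeFinset.card
        ≤ (G.deleteIncidenceSet w).edgeFinset.card + G.degree w := by
          rw [G.card_edgeFinset_deleteIncidenceSet w]
          omega
      _ ≤ (d + 1) * N.card + (d + 1) := by
          gcongr
          · exact ih _ hlt hN (fun v =>
              (SimpleGraph.degree_le_of_le (G.deleteIncidenceSet_le w)).trans (hdeg v)) rfl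
          · exact (hdeg w).trans d.le_succ
      _ = (d + 1) * (N.card + 1) := by ring
      _ ≤ (d + 1) * M.card := by gcongr; exact hlt

end IsMaximumMatching

end

theorem stmt19_general {V : Type*} [Fintype V] (G : SimpleGraph V) [DecidableRel G.Adj]
    {d m : ℕ} (hdeg : ∀ v, G.degree v ≤ d)
    (hm : IsGreatest {n : ℕ | ∃ M : Finset (Sym2 V), IsMatchingSet G M ∧ M.card = n} m) :
    G.support.ncard ≤ (d + 1) * m ∧ G.edgeSet.ncard ≤ (d + 1) * m := by
  classical
  obtain ⟨⟨M, hM, rfl⟩, hmax⟩ := hm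
  have hMmax : IsMaximumMatching G M := ⟨hM, fun N hN => hmax ⟨N, hN, rfl⟩⟩
  constructor
  · exact ENat.toNat_le_of_le_natCast (hMmax.encard_support_le hdeg)
  · rw [← G.coe_edgeFinset, Set.ncard_coe_finset]
    exact hMmax.card_edgeFinset_le hdeg

theorem stmt19 {V : Type*} [Fintype V] [DecidableEq V]
    (G : SimpleGraph V) [DecidableRel G.Adj]
    (k : ℕ) (hk : 0 < k)
    (hdeg : ∀ v : V, 1 ≤ G.degree v ∧ G.degree v ≤ 2 * (k - 1))
    (m : ℕ)
    (hm : IsGreatest {n : ℕ | ∃ M : Finset (Sym2 V), IsMatchingSet G M ∧ M.card = n} m) :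
    Fintype.card V ≤ (2 * k - 1) * m ∧ G.edgeSet.ncard ≤ (2 * k - 1) * m := by
  have hsupp : G.support = Set.univ :=
    Set.eq_univ_of_forall fun v => (G.degree_pos_iff_mem_support v).1 (hdeg v).1
  simpa [hsupp, Set.ncard_univ, show 2 * (k - 1) + 1 = 2 * k - 1 by omega] using
    stmt19_general G (fun v => (hdeg v).2) hm
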